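/- For every real ε > 0 there exists r₀ such that for all integers r ≥ r₀ one has f(r, C_{10}) ≤ (2 + ε) · r^{2/3}, where C_{10} denotes the cycle of length 10. -/

import Mathlib

open SimpleGraph

/-- `G` is an `(r,k)`-graph: its vertex set can be partitioned into `r` parts,
each of size at most `k`, with at least one edge between any two distinct parts. -/
def IsRKGraph {V : Type} [Fintype V] (G : SimpleGraph V) (r k : ℕ) : Prop :=
  ∃ P : Fin r → Finset V,
    (∀ v : V, ∃! i, v ∈ P i) ∧
    (∀ i, (P i).card ≤ k) ∧
    ∀ i j : Fin r, i ≠ j → ∃ u ∈ P i, ∃ w ∈ P j, G.Adj u w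

/-- `G` contains a subgraph isomorphic to `H`. -/
def ContainsSub {W V : Type} (H : SimpleGraph W) (G : SimpleGraph V) : Prop :=
  ∃ f : H →g G, Function.Injective f

/-- `f(r,H)`: the minimum `k` for which there exists an `H`-free `(r,k)`-graph. -/
noncomputable def fGraph {W : Type} (H : SimpleGraph W) (r : ℕ) : ℕ :=
  sInf {k | ∃ (n : ℕ) (G : SimpleGraph (Fin n)), ¬ ContainsSub H G ∧ IsRKGraph G r k}

/-!
Over the field with `q` elements, take the Wenger graph: points `(x, a)` and lines `(t, b)` with
`a, b` of length 4, incident when `a j + b j = x * t ^ (j + 1)` for `j < 4`. Along a cycle of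
length 10, summing the incidence relations with alternating signs shows that the five differences
of consecutive `x`-values annihilate every power `t ^ j` with `j ≤ 4` of the five slopes. By
Vandermonde each slope occurs at least twice on the cycle, although adjacent slopes differ, which
is impossible for five lines. Grouping the points by `(x, a 0, a 1)` and the lines by
`(t, b 2, b 3)` gives `q ^ 3` parts of size `2 * q ^ 2`, and the labels of two parts leave just
enough coordinates free to solve for an edge between them. Hence `f(r, C₁₀) ≤ 2 * q ^ 2` for every
prime power `q` with `r ≤ q ^ 3`.

It remains to find a prime power slightly above `r ^ (1 / 3)`. This follows from the non-vanishing
of `ζ` on the line `re s = 1` by a Wiener–Ikehara argument with a compactly supported function `φ`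
such that `0 < φ 0` while `𝓕 φ ≤ 0` outside `[-δ, δ]`. The explicit formula for
`∑ n, Λ n / n * 𝓕 φ (v - log n)` tends to `φ 0 > 0` as `v → ∞`, so some prime power `n` must have
`|v - log n| ≤ δ`.
-/

section RKGraph

variable {V W : Type}

lemma containsSub_iff_isContained {H : SimpleGraph W} {G : SimpleGraph V} :
    ContainsSub H G ↔ H ⊑ G :=
  ⟨fun ⟨f, hf⟩ => ⟨⟨f, hf⟩⟩, fun ⟨f⟩ => ⟨f.toHom, f.injective⟩⟩

lemma IsRKGraph.iso [Fintype V] [Fintype W] {G : SimpleGraph V} {G' : SimpleGraph W} {r k : ℕ}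
    (φ : G ≃g G') (h : IsRKGraph G r k) : IsRKGraph G' r k := by
  obtain ⟨P, hpart, hcard, hadj⟩ := h
  refine ⟨fun i => (P i).map φ.toEquiv.toEmbedding, fun w => ?_, fun i => ?_, fun i j hij => ?_⟩
  · simp only [Finset.mem_map_equiv]
    exact hpart (φ.symm w)
  · simpa using hcard i
  · obtain ⟨u, hu, w, hw, huw⟩ := hadj i j hij
    exact ⟨φ u, Finset.mem_map_of_mem _ hu, φ w, Finset.mem_map_of_mem _ hw,
      φ.map_adj_iff.mpr huw⟩

lemma fGraph_le_of_isRKGraph [Fintype V] {H : SimpleGraph W} {G : SimpleGraph V} {r k : ℕ}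
    (hfree : H.Free G) (hG : IsRKGraph G r k) : fGraph H r ≤ k := by
  refine Nat.sInf_le ⟨_, G.overFin rfl, ?_, hG.iso (G.overFinIso rfl)⟩
  rwa [containsSub_iff_isContained, ← isContained_congr_right (G.overFinIso rfl)]

lemma isRKGraph_induce {ι : Type*} {G : SimpleGraph V} {part : V → ι} {r k : ℕ} (e : Fin r ↪ ι)
    [Fintype {v | part v ∈ Set.range e}] (hcard : ∀ i, (part ⁻¹' {i}).encard ≤ k)
    (hadj : ∀ i j, i ≠ j → ∃ u w, part u = i ∧ part w = j ∧ G.Adj u w) :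
    IsRKGraph (G.induce {v | part v ∈ Set.range e}) r k := by
  classical
  refine ⟨fun i => {v | part v = e i}, fun ⟨v, i, hi⟩ => ?_, fun i => ?_, fun i j hij => ?_⟩
  · exact ⟨i, by simp [hi], fun j hj => e.injective (by simpa [← hi, eq_comm] using hj)⟩
  · have hle := Set.encard_le_encard_of_injOn (s := {v : {v | part v ∈ Set.range e} | part v = e i})
      (t := part ⁻¹' {e i}) (f := Subtype.val) (fun v hv => hv) Subtype.val_injective.injOn
    have := hle.trans (hcard (e i))
    rw [Set.encard_eq_coe_toFinset_card, Nat.cast_le, Set.toFinset_ofPred] at this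
    exact this
  · obtain ⟨u, w, hu, hw, huw⟩ := hadj (e i) (e j) (e.injective.ne hij)
    exact ⟨⟨u, i, hu.symm⟩, by simpa using hu, ⟨w, j, hw.symm⟩, by simpa using hw, huw⟩

lemma fGraph_le_of_labelling [Finite V] {ι : Type*} [Fintype ι] {H : SimpleGraph W}
    {G : SimpleGraph V} {part : V → ι} {r k : ℕ} (hfree : H.Free G)
    (hcard : ∀ i, (part ⁻¹' {i}).encard ≤ k)
    (hadj : ∀ i j, i ≠ j → ∃ u w, part u = i ∧ part w = j ∧ G.Adj u w)
    (hr : r ≤ Fintype.card ι) : fGraph H r ≤ k := by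
  obtain ⟨e⟩ : Nonempty (Fin r ↪ ι) := Function.Embedding.nonempty_of_card_le (by simpa using hr)
  have := Fintype.ofFinite {v | part v ∈ Set.range e}
  exact fGraph_le_of_isRKGraph (fun h => hfree (h.trans ⟨Copy.induce G _⟩))
    (isRKGraph_induce e hcard hadj)

end RKGraph

section PowerSums

variable {ι F : Type*} [Fintype ι] [Field F] {c t : ι → F}

lemma sum_mul_eval_eq_zero {n : ℕ} (h : ∀ j < n, ∑ i, c i * t i ^ j = 0) {P : Polynomial F}
    (hP : P.natDegree < n) : ∑ i, c i * P.eval (t i) = 0 := by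
  simp_rw [P.eval_eq_sum_range, Finset.mul_sum]
  rw [Finset.sum_comm]
  refine Finset.sum_eq_zero fun j hj => ?_
  have hj : j < n := by rw [Finset.mem_range] at hj; omega
  simp_rw [mul_left_comm (c _), ← Finset.mul_sum, h j hj, mul_zero]

lemma exists_ne_eq_of_sum_mul_pow_eq_zero
    (h : ∀ j < Fintype.card ι, ∑ i, c i * t i ^ j = 0) {i : ι} (hi : c i ≠ 0) :
    ∃ j ≠ i, t j = t i := by
  classical
  by_contra! hne
  let P : Polynomial F := ∏ j ∈ Finset.univ.erase i, (Polynomial.X - Polynomial.C (t j))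
  have heval (x : F) : P.eval x = ∏ j ∈ Finset.univ.erase i, (x - t j) := by
    simp [P, Polynomial.eval_prod]
  have hdeg : P.natDegree < Fintype.card ι := by
    simpa [P] using Fintype.card_pos_iff.mpr ⟨i⟩
  have hsum := sum_mul_eval_eq_zero h hdeg
  rw [Finset.sum_eq_single i _ (by simp)] at hsum
  · refine mul_ne_zero hi ?_ hsum
    rw [heval, Finset.prod_ne_zero_iff]
    exact fun j hj => sub_ne_zero.mpr (hne j (Finset.ne_of_mem_erase hj)).symm
  · intro j _ hji
    rw [heval, Finset.prod_eq_zero (i := j) (by simp [hji]) (sub_self _), mul_zero]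

end PowerSums

section Wenger

/-- The incidence relation of the Wenger graph: the point `(x, a)` lies on the line `(t, b)` when
`a j + b j = x * t ^ (j + 1)` for every `j < k`. -/
def WengerIncident {R : Type*} [CommRing R] {k : ℕ} (p l : R × (Fin k → R)) : Prop :=
  ∀ j, p.2 j + l.2 j = p.1 * l.1 ^ (j + 1 : ℕ)

/-- The Wenger graph, the bipartite incidence graph of the points (left summand) and the lines
(right summand) of `R ^ (k + 1)`; over the field with `q` elements it is the classical dense
graph without cycles of length 4, 6 or 10, for `k = 1, 2, 4` respectively. -/
def wengerGraph (R : Type*) [CommRing R] (k : ℕ) :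
    SimpleGraph ((R × (Fin k → R)) ⊕ (R × (Fin k → R))) where
  Adj
    | .inl p, .inr l => WengerIncident p l
    | .inr l, .inl p => WengerIncident p l
    | _, _ => False
  symm := ⟨by rintro (_ | _) (_ | _) h <;> exact h⟩
  loopless := ⟨by rintro (_ | _) h <;> exact h⟩

section CommRing

variable {R : Type*} [CommRing R] {k : ℕ} {p p' l l' : R × (Fin k → R)}

lemma exists_inr_of_wengerGraph_adj_inl {v : (R × (Fin k → R)) ⊕ (R × (Fin k → R))}
    (h : (wengerGraph R k).Adj (.inl p) v) : ∃ l, v = .inr l ∧ WengerIncident p l := by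
  rcases v with p' | l
  · exact h.elim
  · exact ⟨l, rfl, h⟩

lemma exists_inl_of_wengerGraph_adj_inr {v : (R × (Fin k → R)) ⊕ (R × (Fin k → R))}
    (h : (wengerGraph R k).Adj (.inr l) v) : ∃ p, v = .inl p ∧ WengerIncident p l := by
  rcases v with p | l'
  · exact ⟨p, rfl, h⟩
  · exact h.elim

lemma WengerIncident.eq_of_fst_eq_left (h : WengerIncident p l) (h' : WengerIncident p' l)
    (hx : p.1 = p'.1) : p = p' :=
  Prod.ext hx <| funext fun j => add_right_cancel <| (h j).trans (hx ▸ (h' j).symm)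

lemma WengerIncident.eq_of_fst_eq_right (h : WengerIncident p l) (h' : WengerIncident p l')
    (ht : l.1 = l'.1) : l = l' :=
  Prod.ext ht <| funext fun j => add_left_cancel <| (h j).trans (ht ▸ (h' j).symm)

lemma sum_sub_mul_pow_eq_zero {ι : Type*} [Fintype ι] (σ : Equiv.Perm ι)
    {p l : ι → R × (Fin k → R)} (hpl : ∀ i, WengerIncident (p i) (l i))
    (hσ : ∀ i, WengerIncident (p (σ i)) (l i)) {j : ℕ} (hj : j ≤ k) :
    ∑ i, ((p (σ i)).1 - (p i).1) * (l i).1 ^ j = 0 := by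
  cases j with
  | zero => simp [Equiv.sum_comp σ fun i => (p i).1]
  | succ j =>
    have hterm (i : ι) : ((p (σ i)).1 - (p i).1) * (l i).1 ^ (j + 1)
        = (p (σ i)).2 ⟨j, hj⟩ - (p i).2 ⟨j, hj⟩ := by
      linear_combination hpl i ⟨j, hj⟩ - hσ i ⟨j, hj⟩
    simp [hterm, Equiv.sum_comp σ fun i => (p i).2 ⟨j, hj⟩]

end CommRing

lemma exists_periodic_walk_of_cycleGraph_isContained {V : Type*} {G : SimpleGraph V} {n : ℕ}
    (hn : 1 < n) (h : cycleGraph n ⊑ G) :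
    ∃ v : ℕ → V, (∀ i, G.Adj (v i) (v (i + 1))) ∧ ∀ i j, v i = v j ↔ i ≡ j [MOD n] := by
  obtain ⟨n, rfl⟩ := Nat.exists_eq_add_of_le' hn
  obtain ⟨f⟩ := h
  refine ⟨fun i => f ⟨i % (n + 2), Nat.mod_lt _ (by lia)⟩, fun i => f.toHom.map_adj ?_,
    fun i j => f.injective.eq_iff.trans Fin.mk.inj_iff⟩
  refine cycleGraph_adj.mpr (.inr (sub_eq_iff_eq_add'.mpr (Fin.ext ?_)))
  simp [Fin.val_add]

section Cycle

section CommRing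

variable {R : Type*} [CommRing R] {k n : ℕ}

lemma exists_points_lines_of_wengerGraph_adj {v : ℕ → (R × (Fin k → R)) ⊕ (R × (Fin k → R))}
    (hv : ∀ i, (wengerGraph R k).Adj (v i) (v (i + 1))) {p₀ : R × (Fin k → R)}
    (h₀ : v 0 = .inl p₀) :
    ∃ p l : ℕ → R × (Fin k → R), ∀ i, v (2 * i) = .inl (p i) ∧ v (2 * i + 1) = .inr (l i) := by
  have hl {i : ℕ} {p} (hp : v i = .inl p) : ∃ l, v (i + 1) = .inr l :=
    (exists_inr_of_wengerGraph_adj_inl (hp ▸ hv i)).imp fun _ h => h.1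
  have hp (i : ℕ) : ∃ p, v (2 * i) = .inl p := by
    induction i with
    | zero => exact ⟨p₀, h₀⟩
    | succ i ih =>
      obtain ⟨l, hl⟩ := hl ih.choose_spec
      exact (exists_inl_of_wengerGraph_adj_inr (hl ▸ hv (2 * i + 1))).imp fun _ h => h.1
  choose p hp using hp
  choose l hl using fun i => hl (hp i)
  exact ⟨p, l, fun i => ⟨hp i, hl i⟩⟩

lemma exists_periodic_points_lines (hn : 0 < n) (h : cycleGraph (2 * n) ⊑ wengerGraph R k) :
    ∃ p l : ℕ → R × (Fin k → R),
      (∀ i j, p i = p j ↔ i ≡ j [MOD n]) ∧ (∀ i j, l i = l j ↔ i ≡ j [MOD n]) ∧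
      ∀ i, WengerIncident (p i) (l i) ∧ WengerIncident (p (i + 1)) (l i) := by
  obtain ⟨v, hv, hper⟩ := exists_periodic_walk_of_cycleGraph_isContained (by lia) h
  wlog h₀ : ∃ p₀, v 0 = .inl p₀ generalizing v
  · refine this (fun i => v (i + 1)) (fun i => hv (i + 1)) (fun i j => ?_) ?_
    · rw [hper, Nat.ModEq.add_iff_right rfl]
    · obtain ⟨l₀, hl₀⟩ : ∃ l₀, v 0 = .inr l₀ := by
        rcases hv₀ : v 0 with p | l
        · exact (h₀ ⟨p, hv₀⟩).elim
        · exact ⟨l, rfl⟩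
      exact (exists_inl_of_wengerGraph_adj_inr (hl₀ ▸ hv 0)).imp fun _ h => h.1
  obtain ⟨p₀, h₀⟩ := h₀
  obtain ⟨p, l, hpl⟩ := exists_points_lines_of_wengerGraph_adj hv h₀
  choose hp hl using hpl
  refine ⟨p, l, fun i j => ?_, fun i j => ?_, fun i => ⟨?_, ?_⟩⟩
  · rw [← Sum.inl_injective.eq_iff, ← hp, ← hp, hper, Nat.ModEq.mul_left_cancel_iff' two_ne_zero]
  · rw [← Sum.inr_injective.eq_iff, ← hl, ← hl, hper, Nat.ModEq.add_iff_right rfl,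
      Nat.ModEq.mul_left_cancel_iff' two_ne_zero]
  · change (wengerGraph R k).Adj (.inl (p i)) (.inr (l i))
    rw [← hp, ← hl]
    exact hv (2 * i)
  · change (wengerGraph R k).Adj (.inr (l i)) (.inl (p (i + 1)))
    rw [← hp, ← hl]
    exact hv (2 * i + 1)

lemma exists_points_lines_of_cycleGraph_isContained [NeZero n]
    (h : cycleGraph (2 * n) ⊑ wengerGraph R k) :
    ∃ p l : Fin n → R × (Fin k → R), p.Injective ∧ l.Injective ∧
      ∀ i, WengerIncident (p i) (l i) ∧ WengerIncident (p (i + 1)) (l i) := by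
  obtain ⟨p, l, hp, hl, hpl⟩ := exists_periodic_points_lines (NeZero.pos n) h
  have hmod {i j : Fin n} : i ≡ j [MOD n] ↔ i = j := by
    rw [Nat.ModEq, Nat.mod_eq_of_lt i.2, Nat.mod_eq_of_lt j.2, Fin.ext_iff]
  refine ⟨fun i => p i, fun i => l i, fun i j hij => hmod.mp ((hp _ _).mp hij),
    fun i j hij => hmod.mp ((hl _ _).mp hij), fun i => ⟨(hpl i).1, ?_⟩⟩
  have hsucc : p (i + 1 : Fin n) = p (i + 1) := (hp _ _).mpr (by simp [Nat.ModEq, Fin.val_add])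
  simpa only [hsucc] using (hpl i).2

end CommRing

section Field

variable {F : Type*} [Field F] {k : ℕ}

lemma exists_ne_fst_eq_of_wengerIncident {ι : Type*} [Fintype ι] (hι : Fintype.card ι ≤ k + 1)
    (σ : Equiv.Perm ι) {p l : ι → F × (Fin k → F)} (hpl : ∀ i, WengerIncident (p i) (l i))
    (hσ : ∀ i, WengerIncident (p (σ i)) (l i)) {i : ι} (hp : p (σ i) ≠ p i) :
    ∃ j ≠ i, (l j).1 = (l i).1 :=
  exists_ne_eq_of_sum_mul_pow_eq_zero (c := fun i => (p (σ i)).1 - (p i).1)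
    (fun _ hj => sum_sub_mul_pow_eq_zero σ hpl hσ (by omega))
    (sub_ne_zero.mpr fun hx => hp ((hσ i).eq_of_fst_eq_left (hpl i) hx))

lemma exists_slopes_of_cycleGraph_isContained {n : ℕ} [NeZero n] (hn : 1 < n) (hnk : n ≤ k + 1)
    (h : cycleGraph (2 * n) ⊑ wengerGraph F k) :
    ∃ t : Fin n → F, ∀ i, t i ≠ t (i + 1) ∧ ∃ j ≠ i, t j = t i := by
  obtain ⟨p, l, hp, hl, hpl⟩ := exists_points_lines_of_cycleGraph_isContained h
  have hone : (1 : Fin n) ≠ 0 := by simpa using hn.ne'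
  refine ⟨fun i => (l i).1, fun i => ⟨fun ht => ?_, ?_⟩⟩
  · exact left_ne_add.mpr hone (hl ((hpl i).2.eq_of_fst_eq_right (hpl (i + 1)).1 ht))
  · exact exists_ne_fst_eq_of_wengerIncident (by simpa) (Equiv.addRight 1) (fun i => (hpl i).1)
      (fun i => (hpl i).2) (hp.ne (add_ne_left.mpr hone))

-- The classes of equal values would be independent sets of size exactly 2 in a 5-cycle.
lemma exists_forall_ne_of_forall_ne_add_one {α : Type*} {t : Fin 5 → α}
    (ht : ∀ i, t i ≠ t (i + 1)) : ∃ i, ∀ j ≠ i, t j ≠ t i := by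
  simp only [Fin.forall_fin_succ, Fin.exists_fin_succ] at *
  grind

lemma cycleGraph_ten_free_wengerGraph (hk : 4 ≤ k) : (cycleGraph 10).Free (wengerGraph F k) := by
  intro h
  obtain ⟨t, ht⟩ := exists_slopes_of_cycleGraph_isContained (n := 5) (by lia) (by lia) h
  obtain ⟨i, hi⟩ := exists_forall_ne_of_forall_ne_add_one fun i => (ht i).1
  obtain ⟨j, hji, hj⟩ := (ht i).2
  exact hi j hji hj

end Field
end Cycle

section Parts

variable {R : Type*} {m : ℕ}

/-- The label of the part of a vertex of `wengerGraph R (m + m)`: points are grouped by `x` and the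
first `m` coordinates of `a`, lines by `t` and the last `m` coordinates of `b`. Each part thus
contains both points and lines. -/
def wengerPart (v : (R × (Fin (m + m) → R)) ⊕ (R × (Fin (m + m) → R))) : R × (Fin m → R) :=
  v.elim (fun p => (p.1, fun j => p.2 (Fin.castAdd m j)))
    (fun l => (l.1, fun j => l.2 (Fin.natAdd m j)))

lemma exists_wengerGraph_adj_of_wengerPart [CommRing R] (u w : R × (Fin m → R)) :
    ∃ p l, wengerPart p = u ∧ wengerPart l = w ∧ (wengerGraph R (m + m)).Adj p l := by
  obtain ⟨x, a⟩ := u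
  obtain ⟨t, b⟩ := w
  refine ⟨.inl (x, Fin.append a fun j => x * t ^ (m + j + 1 : ℕ) - b j),
    .inr (t, Fin.append (fun j => x * t ^ (j + 1 : ℕ) - a j) b), ?_, ?_, fun j => ?_⟩
  · simp only [wengerPart, Sum.elim_inl, Fin.append_left]
  · simp only [wengerPart, Sum.elim_inr, Fin.append_right]
  · cases j using Fin.addCases with
    | left j => simp only [Fin.append_left, Fin.val_castAdd, add_sub_cancel]
    | right j => simp only [Fin.append_right, Fin.val_natAdd, sub_add_cancel]

lemma wengerPart_preimage_subset_range (u : R × (Fin m → R)) :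
    wengerPart ⁻¹' {u} ⊆ Set.range (Sum.map (fun c => (u.1, Fin.append u.2 c))
      fun c => (u.1, Fin.append c u.2)) := by
  rintro (⟨x, a⟩ | ⟨t, b⟩) rfl
  · exact ⟨.inl fun j => a (Fin.natAdd m j),
      congrArg (fun a' => Sum.inl (x, a')) Fin.append_castAdd_natAdd⟩
  · exact ⟨.inr fun j => b (Fin.castAdd m j),
      congrArg (fun b' => Sum.inr (t, b')) Fin.append_castAdd_natAdd⟩

lemma encard_wengerPart_preimage_le [Fintype R] (u : R × (Fin m → R)) :
    (wengerPart ⁻¹' {u}).encard ≤ (2 * Fintype.card R ^ m : ℕ) := by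
  classical
  refine (Set.encard_le_encard (wengerPart_preimage_subset_range u)).trans ?_
  rw [← Set.image_univ]
  exact (Set.encard_image_le _ _).trans (by simp [two_mul])

end Parts

lemma fGraph_le_of_free_wengerGraph {W R : Type} [CommRing R] [Fintype R] {H : SimpleGraph W}
    {m r : ℕ} (hfree : H.Free (wengerGraph R (m + m))) (hr : r ≤ Fintype.card R ^ (m + 1)) :
    fGraph H r ≤ 2 * Fintype.card R ^ m := by
  classical
  exact fGraph_le_of_labelling hfree encard_wengerPart_preimage_le
    (fun u w _ => exists_wengerGraph_adj_of_wengerPart u w) (by simpa [pow_succ'] using hr)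

lemma fGraph_cycleGraph_ten_le_of_isPrimePow {q r : ℕ} (hq : IsPrimePow q) (hr : r ≤ q ^ 3) :
    fGraph (cycleGraph 10) r ≤ 2 * q ^ 2 := by
  obtain ⟨p, n, hp, hn, rfl⟩ := hq
  have : Fact p.Prime := ⟨hp.nat_prime⟩
  have := Fintype.ofFinite (GaloisField p n)
  have hcard : Fintype.card (GaloisField p n) = p ^ n := by
    rw [← Nat.card_eq_fintype_card, GaloisField.card p n hn.ne']
  rw [← hcard] at hr ⊢
  exact fGraph_le_of_free_wengerGraph (m := 2) (cycleGraph_ten_free_wengerGraph le_rfl) hr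

end Wenger

section Kernel

open Complex Filter MeasureTheory FourierTransform ComplexConjugate Convolution ContDiff

lemma conj_fourier_eq_self {f : ℝ → ℂ} (hf : ∀ t, conj (f (-t)) = f t) (w : ℝ) :
    conj (𝓕 f w) = 𝓕 f w := by
  rw [Real.fourier_real_eq_integral_exp_smul, ← integral_conj, ← integral_neg_eq_self]
  refine integral_congr_ae (.of_forall fun t => ?_)
  simp only [smul_eq_mul, map_mul, hf, ← exp_conj, conj_ofReal, conj_I]
  push_cast
  ring_nf

lemma fourier_comp_mul_left (f : ℝ → ℂ) {c : ℝ} (hc : 0 < c) (w : ℝ) :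
    𝓕 (fun t => f (c * t)) w = (c⁻¹ : ℝ) * 𝓕 f (w / c) := by
  simp_rw [Real.fourier_real_eq_integral_exp_smul]
  have := Measure.integral_comp_mul_left
    (fun t => cexp (↑(-2 * Real.pi * t * (w / c)) * I) • f t) c
  rw [abs_of_pos (inv_pos.mpr hc), real_smul] at this
  rw [← this]
  refine integral_congr_ae (.of_forall fun t => ?_)
  have : -2 * Real.pi * t * w = -2 * Real.pi * (c * t) * (w / c) := by field_simp
  simp only [this]

lemma integrable_fourier_of_hasCompactSupport {f : ℝ → ℂ} (hf : ContDiff ℝ ∞ f)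
    (hsupp : HasCompactSupport f) : Integrable (𝓕 f) :=
  (𝓕 (hsupp.toSchwartzMap hf)).integrable

lemma exists_fourier_re_nonneg : ∃ h : ℝ → ℂ, ContDiff ℝ ∞ h ∧ HasCompactSupport h ∧
    0 < (h 0).re ∧ ∀ w, 0 ≤ (𝓕 h w).re := by
  let b : ContDiffBump (0 : ℝ) := ⟨1, 2, one_pos, one_lt_two⟩
  let g : ℝ → ℂ := fun t => b t
  have hg : ContDiff ℝ ∞ g := ofRealCLM.contDiff.comp b.contDiff
  have hsupp : HasCompactSupport g := b.hasCompactSupport.comp_left ofReal_zero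
  have hint : Integrable g := hg.continuous.integrable_of_hasCompactSupport hsupp
  refine ⟨g ⋆[ContinuousLinearMap.mul ℝ ℂ] g, ?_, hsupp.convolution _ hsupp, ?_, fun w => ?_⟩
  · exact hsupp.contDiff_convolution_right _ hint.locallyIntegrable hg
  · have hzero : (g ⋆[ContinuousLinearMap.mul ℝ ℂ] g) 0 = ((∫ t, b t * b t : ℝ) : ℂ) := by
      simp [convolution_def, g, b.neg, ← integral_complex_ofReal]
    rw [hzero, ofReal_re]
    refine (b.continuous.mul b.continuous).integral_pos_of_hasCompactSupport_nonneg_nonzero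
      b.hasCompactSupport.mul_left (fun t => mul_self_nonneg _) (x := 0) ?_
    rw [b.eventuallyEq_one.eq_of_nhds]
    simp
  · have hreal : conj (𝓕 g w) = 𝓕 g w :=
      conj_fourier_eq_self (fun t => by simp only [g, b.neg, conj_ofReal]) w
    have hmul : 𝓕 (g ⋆[ContinuousLinearMap.mul ℝ ℂ] g) w = 𝓕 g w * 𝓕 g w :=
      Real.fourier_mul_convolution_eq hint hint w
    rw [hmul]
    nth_rewrite 1 [← hreal]
    rw [← normSq_eq_conj_mul_self, ofReal_re]
    exact normSq_nonneg _

lemma fourier_deriv_deriv {h : ℝ → ℂ} (hh : ContDiff ℝ ∞ h) (hsupp : HasCompactSupport h)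
    (w : ℝ) : 𝓕 (deriv (deriv h)) w = -(2 * Real.pi * w) ^ 2 * 𝓕 h w := by
  have hint {f : ℝ → ℂ} (hf : ContDiff ℝ ∞ f) (hs : HasCompactSupport f) : Integrable f :=
    hf.continuous.integrable_of_hasCompactSupport hs
  have hh' : ContDiff ℝ ∞ (deriv h) := (contDiff_infty_iff_deriv.mp hh).2
  have hh'' : ContDiff ℝ ∞ (deriv (deriv h)) := (contDiff_infty_iff_deriv.mp hh').2
  rw [Real.fourier_deriv (hint hh' hsupp.deriv) (hh'.differentiable (by simp))
    (hint hh'' hsupp.deriv.deriv), Real.fourier_deriv (hint hh hsupp) (hh.differentiable (by simp))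
    (hint hh' hsupp.deriv)]
  simp only [smul_eq_mul]
  linear_combination (2 * Real.pi * w) ^ 2 * 𝓕 h w * I_sq

lemma fourier_add_const_mul {f g : ℝ → ℂ} (hf : Integrable f) (hg : Integrable g) (c : ℂ)
    (w : ℝ) : 𝓕 (fun t => f t + c * g t) w = 𝓕 f w + c * 𝓕 g w := by
  have hint {f : ℝ → ℂ} (hf : Integrable f) := (Real.fourierIntegral_convergent_iff w).mpr hf
  simp only [Real.fourier_eq, ← integral_const_mul]
  rw [← integral_add (hint hf) ((hint hg).const_mul c)]
  simp only [smul_add, mul_smul_comm]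

-- `h'' + (2 * π * a) ^ 2 * h` has Fourier transform `(2 * π) ^ 2 * (a ^ 2 - w ^ 2) * 𝓕 h w`.
lemma exists_fourier_re_nonpos_of_large : ∃ a > 0, ∃ φ : ℝ → ℂ, ContDiff ℝ ∞ φ ∧
    HasCompactSupport φ ∧ 0 < (φ 0).re ∧ ∀ w, a < |w| → (𝓕 φ w).re ≤ 0 := by
  obtain ⟨h, hh, hsupp, hpos, hnonneg⟩ := exists_fourier_re_nonneg
  have hh'' : ContDiff ℝ ∞ (deriv (deriv h)) :=
    (contDiff_infty_iff_deriv.mp (contDiff_infty_iff_deriv.mp hh).2).2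
  have hint : Integrable h := hh.continuous.integrable_of_hasCompactSupport hsupp
  have hint'' : Integrable (deriv (deriv h)) :=
    hh''.continuous.integrable_of_hasCompactSupport hsupp.deriv.deriv
  obtain ⟨a, ha, hlarge⟩ : ∃ a : ℝ, 0 < a ∧
      0 < (deriv (deriv h) 0).re + (2 * Real.pi * a) ^ 2 * (h 0).re := by
    have htop : Tendsto (fun a : ℝ => (deriv (deriv h) 0).re + (2 * Real.pi * a) ^ 2 * (h 0).re)
        atTop atTop :=
      tendsto_atTop_add_const_left _ _ (Tendsto.atTop_mul_const hpos
        ((tendsto_pow_atTop two_ne_zero).comp (tendsto_id.const_mul_atTop Real.two_pi_pos)))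
    exact ((eventually_gt_atTop 0).and (htop.eventually_gt_atTop 0)).exists
  refine ⟨a, ha, fun t => deriv (deriv h) t + ((2 * Real.pi * a) ^ 2 : ℝ) * h t,
    hh''.add (contDiff_const.mul hh), hsupp.deriv.deriv.add hsupp.mul_left, ?_, fun w hw => ?_⟩
  · rwa [add_re, re_ofReal_mul]
  · have hfourier : 𝓕 (fun t => deriv (deriv h) t + ((2 * Real.pi * a) ^ 2 : ℝ) * h t) w
        = ((2 * Real.pi) ^ 2 * (a ^ 2 - w ^ 2) : ℝ) * 𝓕 h w := by
      rw [fourier_add_const_mul hint'' hint, fourier_deriv_deriv hh hsupp]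
      push_cast
      ring
    rw [hfourier, re_ofReal_mul]
    refine mul_nonpos_of_nonpos_of_nonneg (mul_nonpos_of_nonneg_of_nonpos (by positivity) ?_)
      (hnonneg w)
    exact sub_nonpos.mpr (sq_le_sq.mpr ((abs_of_pos ha).trans_lt hw).le)

lemma exists_fourier_re_nonpos {δ : ℝ} (hδ : 0 < δ) : ∃ φ : ℝ → ℂ, Continuous φ ∧
    HasCompactSupport φ ∧ Integrable (𝓕 φ) ∧ 0 < (φ 0).re ∧ ∀ w, δ < |w| → (𝓕 φ w).re ≤ 0 := by
  obtain ⟨a, ha, φ, hφ, hsupp, hpos, hneg⟩ := exists_fourier_re_nonpos_of_large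
  have hc : 0 < δ / a := div_pos hδ ha
  have hφ' : ContDiff ℝ ∞ fun t => φ (δ / a * t) := hφ.comp (contDiff_const.mul contDiff_id)
  have hsupp' : HasCompactSupport fun t => φ (δ / a * t) :=
    hsupp.comp_homeomorph (Homeomorph.mulLeft₀ _ hc.ne')
  refine ⟨_, hφ'.continuous, hsupp', integrable_fourier_of_hasCompactSupport hφ' hsupp',
    by simpa using hpos, fun w hw => ?_⟩
  rw [fourier_comp_mul_left φ hc, re_ofReal_mul]
  refine mul_nonpos_of_nonneg_of_nonpos (inv_pos.mpr hc).le (hneg _ ?_)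
  rw [abs_div, abs_of_pos hc, lt_div_iff₀ hc]
  simpa [ha.ne', mul_div_cancel₀] using hw

end Kernel

section Tauberian

open Complex Filter MeasureTheory FourierTransform Set Topology

lemma term_sub_two_pi_mul_I (f : ℕ → ℂ) (s : ℂ) (t : ℝ) (n : ℕ) :
    LSeries.term f (s - 2 * Real.pi * t * I) n
      = LSeries.term f s n * cexp (2 * Real.pi * t * Real.log n * I) := by
  rcases eq_or_ne n 0 with rfl | hn
  · simp only [LSeries.term_zero, zero_mul]
  · rw [LSeries.term_of_ne_zero hn, LSeries.term_of_ne_zero hn,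
      cpow_sub _ _ (Nat.cast_ne_zero.mpr hn), cpow_def_of_ne_zero (Nat.cast_ne_zero.mpr hn)
        (2 * Real.pi * t * I), ← natCast_log, div_div_eq_mul_div, mul_div_right_comm]
    ring_nf

lemma fourierChar_mul_sub_smul (t v x : ℝ) (z : ℂ) :
    Real.fourierChar (-(t * (v - x))) • z
      = Real.fourierChar (-(t * v)) • z * cexp (2 * Real.pi * t * x * I) := by
  rw [mul_sub, neg_sub', sub_neg_eq_add, AddChar.map_add_eq_mul, mul_comm (Real.fourierChar _),
    mul_smul, Circle.smul_def, smul_eq_mul, mul_comm, Real.fourierChar_apply]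
  push_cast
  ring_nf

lemma hasSum_fourier_mul_LSeries {f : ℕ → ℂ} {s : ℂ} (hf : LSeriesSummable f s) {φ : ℝ → ℂ}
    (hφ : Integrable φ) (v : ℝ) :
    HasSum (fun n => LSeries.term f s n * 𝓕 φ (v - Real.log n))
      (𝓕 (fun t : ℝ => φ t * LSeries f (s - 2 * Real.pi * t * I)) v) := by
  have hint (w : ℝ) : Integrable fun t : ℝ => Real.fourierChar (-(t * w)) • φ t := by
    simpa only [Real.inner_apply] using (Real.fourierIntegral_convergent_iff w).mpr hφ
  have hterm (n : ℕ) (t : ℝ) :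
      LSeries.term f s n * Real.fourierChar (-(t * (v - Real.log n))) • φ t
        = Real.fourierChar (-(t * v)) • φ t * LSeries.term f (s - 2 * Real.pi * t * I) n := by
    rw [term_sub_two_pi_mul_I, fourierChar_mul_sub_smul]
    ring
  have hsum := hasSum_integral_of_summable_integral_norm
    (F := fun n t => LSeries.term f s n * Real.fourierChar (-(t * (v - Real.log n))) • φ t)
    (fun n => (hint _).const_mul _) (by
      simp only [norm_mul, Circle.norm_smul, integral_const_mul]
      exact hf.norm.mul_right _)
  simp only [integral_const_mul, ← Real.fourier_real_eq] at hsum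
  simp only [hterm, tsum_mul_left] at hsum
  simpa only [LSeries, Real.fourier_real_eq, smul_mul_assoc] using hsum

lemma fourier_div_sub_two_pi_mul_I {σ : ℝ} (hσ : 0 < σ) {φ : ℝ → ℂ} (hφ : Integrable φ) (v : ℝ) :
    𝓕 (fun t : ℝ => φ t / (σ - 2 * Real.pi * t * I)) v
      = ∫ x in Ioi (0 : ℝ), Real.exp (-σ * x) * 𝓕 φ (v - x) := by
  have hlaplace (t : ℝ) : ∫ x in Ioi (0 : ℝ), cexp (-(σ - 2 * Real.pi * t * I) * x)
      = (σ - 2 * Real.pi * t * I)⁻¹ := by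
    rw [integral_exp_mul_complex_Ioi (by simpa)]
    simp only [ofReal_zero, mul_zero, Complex.exp_zero, neg_div_neg_eq, one_div]
  have hexp (t x : ℝ) : Real.exp (-σ * x) * Real.fourierChar (-(t * (v - x))) • φ t
      = Real.fourierChar (-(t * v)) • φ t * cexp (-(σ - 2 * Real.pi * t * I) * x) := by
    rw [fourierChar_mul_sub_smul, mul_left_comm, ofReal_exp, ← Complex.exp_add]
    push_cast
    ring_nf
  have hint : Integrable (Function.uncurry fun x t : ℝ =>
      Real.exp (-σ * x) * Real.fourierChar (-(t * (v - x))) • φ t)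
      ((volume.restrict (Ioi 0)).prod volume) := by
    have hprod : Integrable (fun p : ℝ × ℝ => (Real.exp (-σ * p.1) : ℂ) * φ p.2)
        ((volume.restrict (Ioi 0)).prod volume) :=
      Integrable.mul_prod (exp_neg_integrableOn_Ioi 0 hσ).ofReal hφ
    refine (hprod.bdd_mul (c := 1)
      (f := fun p : ℝ × ℝ => (Real.fourierChar (-(p.2 * (v - p.1))) : ℂ)) ?_ ?_).congr ?_
    · exact Continuous.aestronglyMeasurable (by fun_prop)
    · exact .of_forall fun p => (Circle.norm_coe _).le
    · exact .of_forall fun p => mul_left_comm _ _ _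
  simp only [Real.fourier_real_eq, ← integral_const_mul]
  rw [integral_integral_swap hint]
  simp only [hexp, integral_const_mul, hlaplace, div_eq_mul_inv, ← smul_mul_assoc]

lemma continuousOn_fourier_mul {φ : ℝ → ℂ} {G : ℂ → ℂ} (hφ : Continuous φ)
    (hsupp : HasCompactSupport φ) (hG : ContinuousOn G {s | 1 ≤ s.re}) (v : ℝ) :
    ContinuousOn (fun σ : ℝ => 𝓕 (fun t : ℝ => φ t * G (σ - 2 * Real.pi * t * I)) v)
      (Ici 1) := by
  simp only [Real.fourier_real_eq]
  refine continuousOn_integral_of_compact_support hsupp ?_ fun σ t _ ht => ?_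
  · refine ContinuousOn.smul (Continuous.continuousOn (by fun_prop)) ?_
    refine ContinuousOn.mul (Continuous.continuousOn (by fun_prop)) ?_
    exact hG.comp (Continuous.continuousOn (by fun_prop)) fun p hp => by simpa using hp.1
  · simp [image_eq_zero_of_notMem_tsupport ht]

lemma tendsto_integral_exp_neg_mul {μ : Measure ℝ} {g : ℝ → ℂ} (hg : IntegrableOn g (Ioi 0) μ) :
    Tendsto (fun σ : ℝ => ∫ x in Ioi (0 : ℝ), Real.exp (-σ * x) * g x ∂μ) (𝓝[>] 0)
      (𝓝 (∫ x in Ioi (0 : ℝ), g x ∂μ)) := by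
  refine tendsto_integral_filter_of_dominated_convergence (fun x => ‖g x‖)
    (.of_forall fun σ => ?_) ?_ hg.norm (.of_forall fun x => ?_)
  · exact (Continuous.aestronglyMeasurable (by fun_prop)).mul hg.aestronglyMeasurable
  · filter_upwards [self_mem_nhdsWithin] with σ hσ
    filter_upwards [ae_restrict_mem measurableSet_Ioi] with x hx
    rw [norm_mul, norm_real, Real.norm_eq_abs, Real.abs_exp]
    refine mul_le_of_le_one_left (norm_nonneg _) (Real.exp_le_one_iff.mpr ?_)
    rw [neg_mul, neg_nonpos]
    exact (mul_pos hσ hx).le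
  · have hcont : Continuous fun σ : ℝ => (Real.exp (-σ * x) : ℂ) * g x := by fun_prop
    simpa using (hcont.tendsto 0).mono_left nhdsWithin_le_nhds

lemma tendsto_integral_Ioi_comp_sub {g : ℝ → ℂ} (hg : Integrable g) :
    Tendsto (fun v => ∫ x in Ioi (0 : ℝ), g (v - x)) atTop (𝓝 (∫ y, g y)) := by
  have hsub (v : ℝ) : ∫ x in Ioi (0 : ℝ), g (v - x) = ∫ y in Iio v, g y := by
    rw [← integral_indicator measurableSet_Ioi, ← integral_indicator measurableSet_Iio,
      ← integral_sub_left_eq_self _ volume v]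
    simp [indicator]
  simp only [hsub]
  exact (aecover_Iio tendsto_id).integral_tendsto_of_countably_generated hg

lemma hasSum_term_mul_fourier {f : ℕ → ℂ} {G : ℂ → ℂ} {A : ℂ} {σ : ℝ} (hσ : 1 < σ)
    (hf : LSeriesSummable f σ) (hG : ContinuousOn G {s | 1 ≤ s.re})
    (hfG : ∀ s : ℂ, 1 < s.re → LSeries f s = G s + A / (s - 1)) {φ : ℝ → ℂ} (hφ : Continuous φ)
    (hsupp : HasCompactSupport φ) (v : ℝ) :
    HasSum (fun n => LSeries.term f σ n * 𝓕 φ (v - Real.log n))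
      (𝓕 (fun t : ℝ => φ t * G (σ - 2 * Real.pi * t * I)) v
        + A * ∫ x in Ioi (0 : ℝ), Real.exp (-(σ - 1) * x) * 𝓕 φ (v - x)) := by
  have hint : Integrable φ := hφ.integrable_of_hasCompactSupport hsupp
  rw [← fourier_div_sub_two_pi_mul_I (sub_pos.mpr hσ) hint, ← fourier_add_const_mul]
  · convert hasSum_fourier_mul_LSeries hf hint v using 3 with t
    rw [hfG _ (by simpa)]
    push_cast
    ring
  · refine Continuous.integrable_of_hasCompactSupport (hφ.mul ?_) hsupp.mul_right
    exact hG.comp_continuous (by fun_prop) fun t => by simpa using hσ.le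
  · refine Continuous.integrable_of_hasCompactSupport (hφ.mul ?_) hsupp.mul_right
    refine Continuous.inv₀ (by fun_prop) fun t ht => (sub_pos.mpr hσ).ne' ?_
    simpa using congrArg re ht

lemma fourier_add_mul_integral_re_nonpos {f : ℕ → ℝ} {G : ℂ → ℂ} {A : ℂ} (hf₀ : ∀ n, 0 ≤ f n)
    (hf : LSeries.abscissaOfAbsConv (fun n => (f n : ℂ)) ≤ 1) (hG : ContinuousOn G {s | 1 ≤ s.re})
    (hfG : ∀ s : ℂ, 1 < s.re → LSeries (fun n => (f n : ℂ)) s = G s + A / (s - 1)) {φ : ℝ → ℂ}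
    (hφ : Continuous φ) (hsupp : HasCompactSupport φ) (hint : Integrable (𝓕 φ)) {v : ℝ}
    (hneg : ∀ n : ℕ, f n ≠ 0 → (𝓕 φ (v - Real.log n)).re ≤ 0) :
    (𝓕 (fun t : ℝ => φ t * G ((1 : ℝ) - 2 * Real.pi * t * I)) v
      + A * ∫ x in Ioi (0 : ℝ), 𝓕 φ (v - x)).re ≤ 0 := by
  have hshift : Tendsto (fun σ : ℝ => σ - 1) (𝓝[>] 1) (𝓝[>] 0) :=
    tendsto_nhdsWithin_iff.mpr ⟨tendsto_sub_nhds_zero_iff.mpr nhdsWithin_le_nhds,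
      eventually_mem_nhdsWithin.mono fun _ hσ => mem_Ioi.mpr (sub_pos.mpr hσ)⟩
  have hlim := (((continuousOn_fourier_mul hφ hsupp hG v).continuousWithinAt self_mem_Ici).mono
    Ioi_subset_Ici_self).tendsto.add (((tendsto_integral_exp_neg_mul
      (hint.comp_sub_left v).integrableOn).comp hshift).const_mul A)
  refine le_of_tendsto ((continuous_re.tendsto _).comp hlim) ?_
  filter_upwards [self_mem_nhdsWithin] with σ hσ
  have hsummable : LSeriesSummable (fun n => (f n : ℂ)) σ :=
    LSeriesSummable_of_abscissaOfAbsConv_lt_re (hf.trans_lt (by exact_mod_cast hσ))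
  refine hasSum_le (fun n => ?_)
    (hasSum_re (hasSum_term_mul_fourier hσ hsummable hG hfG hφ hsupp v)) hasSum_zero
  obtain ⟨hre, him⟩ := LSeries.term_nonneg (a := fun n => (f n : ℂ)) (zero_le_real.mpr (hf₀ n)) σ
  rw [mul_re, ← him, zero_im, zero_mul, sub_zero]
  by_cases hn : f n = 0
  · rw [LSeries.term_def]
    simp [hn]
  · exact mul_nonpos_of_nonneg_of_nonpos hre (hneg n hn)

lemma tendsto_fourier_add_mul_integral {g φ : ℝ → ℂ} (A : ℂ) (hφ : Continuous φ)
    (hφint : Integrable φ) (hint : Integrable (𝓕 φ)) :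
    Tendsto (fun v => 𝓕 g v + A * ∫ x in Ioi (0 : ℝ), 𝓕 φ (v - x)) atTop (𝓝 (A * φ 0)) := by
  have hinv : ∫ w, 𝓕 φ w = φ 0 := by
    rw [← congrFun (hφ.fourierInv_fourier_eq hφint hint) 0, Real.fourierInv_eq]
    simp only [inner_zero_right, AddChar.map_zero_eq_one, one_smul]
  rw [← hinv]
  simpa using ((Real.zero_at_infty_fourier g).mono_left atTop_le_cocompact).add
    ((tendsto_integral_Ioi_comp_sub hint).const_mul A)

theorem eventually_exists_abs_sub_log_le {f : ℕ → ℝ} {G : ℂ → ℂ} {A δ : ℝ} (hf₀ : ∀ n, 0 ≤ f n)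
    (hf : LSeries.abscissaOfAbsConv (fun n => (f n : ℂ)) ≤ 1) (hG : ContinuousOn G {s | 1 ≤ s.re})
    (hfG : ∀ s : ℂ, 1 < s.re → LSeries (fun n => (f n : ℂ)) s = G s + A / (s - 1))
    (hA : 0 < A) (hδ : 0 < δ) : ∀ᶠ v in atTop, ∃ n, f n ≠ 0 ∧ |v - Real.log n| ≤ δ := by
  obtain ⟨φ, hφ, hsupp, hint, hpos, hneg⟩ := exists_fourier_re_nonpos hδ
  have hlim := (continuous_re.tendsto _).comp (tendsto_fourier_add_mul_integral
    (g := fun t : ℝ => φ t * G ((1 : ℝ) - 2 * Real.pi * t * I)) A hφ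
    (hφ.integrable_of_hasCompactSupport hsupp) hint)
  have hlimpos : 0 < (A * φ 0).re := by
    rw [re_ofReal_mul]
    exact mul_pos hA hpos
  filter_upwards [hlim.eventually_const_lt hlimpos] with v hv
  by_contra! hfar
  exact hv.not_ge (fourier_add_mul_integral_re_nonpos hf₀ hf hG hfG hφ hsupp hint
    fun n hn => hneg _ (hfar n hn))

end Tauberian

section PrimePowers

open ArithmeticFunction vonMangoldt Filter

lemma eventually_exists_isPrimePow_mod_eq_abs_sub_log_le {m : ℕ} [NeZero m] {a : ZMod m}
    (ha : IsUnit a) {δ : ℝ} (hδ : 0 < δ) :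
    ∀ᶠ v in atTop, ∃ q : ℕ, IsPrimePow q ∧ (q : ZMod m) = a ∧ |v - Real.log q| ≤ δ := by
  have hA : 0 < (m.totient : ℝ)⁻¹ := by
    have := Nat.totient_pos.mpr (NeZero.pos m)
    positivity
  have hpole (s : ℂ) (hs : 1 < s.re) : LSeries (fun n => (residueClass a n : ℂ)) s
      = LFunctionResidueClassAux a s + ((m.totient : ℝ)⁻¹ : ℝ) / (s - 1) := by
    simp [eqOn_LFunctionResidueClassAux ha hs]
  have htauber := eventually_exists_abs_sub_log_le (residueClass_nonneg a)
    (abscissaOfAbsConv_residueClass_le_one a) (continuousOn_LFunctionResidueClassAux a) hpole hA hδ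
  filter_upwards [htauber] with v ⟨q, hq, hqv⟩
  obtain ⟨hqa, hΛ⟩ := Set.indicator_apply_ne_zero.mp hq
  exact ⟨q, vonMangoldt_ne_zero_iff.mp hΛ, hqa, hqv⟩

lemma eventually_exists_isPrimePow_mod_eq_mem_Icc {m : ℕ} [NeZero m] {a : ZMod m}
    (ha : IsUnit a) {c : ℝ} (hc : 1 < c) :
    ∀ᶠ x : ℝ in atTop, ∃ q : ℕ, IsPrimePow q ∧ (q : ZMod m) = a ∧ (q : ℝ) ∈ Set.Icc x (c * x) := by
  have hδ : 0 < Real.log c / 2 := half_pos (Real.log_pos hc)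
  have htop : Tendsto (fun x => Real.log x + Real.log c / 2) atTop atTop :=
    tendsto_atTop_add_const_right _ _ Real.tendsto_log_atTop
  filter_upwards [htop.eventually (eventually_exists_isPrimePow_mod_eq_abs_sub_log_le ha hδ),
    eventually_gt_atTop 0] with x ⟨q, hq, hqa, hqx⟩ hx
  have hq₀ : (0 : ℝ) < q := mod_cast hq.pos
  rw [abs_le] at hqx
  refine ⟨q, hq, hqa, (Real.log_le_log_iff hx hq₀).mp (by linarith),
    (Real.log_le_log_iff hq₀ (by positivity)).mp ?_⟩
  rw [Real.log_mul (by positivity) hx.ne']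
  linarith

end PrimePowers

/-- For every `ε > 0`, for all sufficiently large `r`, `f(r, C_10) ≤ (2+ε)·r^{2/3}`. -/
theorem stmt3 (ε : ℝ) (hε : 0 < ε) :
    ∃ r₀ : ℕ, ∀ r : ℕ, r₀ ≤ r →
      (fGraph (SimpleGraph.cycleGraph 10) r : ℝ) ≤ (2 + ε) * (r : ℝ) ^ ((2 : ℝ) / 3) := by
  obtain ⟨c, hc, hcε⟩ : ∃ c : ℝ, 1 < c ∧ c ^ 2 = 1 + ε / 2 :=
    ⟨√(1 + ε / 2), Real.lt_sqrt_of_sq_lt (by linarith), Real.sq_sqrt (by linarith)⟩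
  have hroot : Filter.Tendsto (fun r : ℕ => (r : ℝ) ^ (1 / 3 : ℝ)) Filter.atTop Filter.atTop :=
    (tendsto_rpow_atTop (by norm_num)).comp tendsto_natCast_atTop_atTop
  refine Filter.eventually_atTop.mp ?_
  filter_upwards [hroot.eventually
    (eventually_exists_isPrimePow_mod_eq_mem_Icc (isUnit_one (M := ZMod 1)) hc)]
    with r ⟨q, hq, _, hle, hge⟩
  have hr : r ≤ q ^ 3 := by
    rw [← @Nat.cast_le ℝ, Nat.cast_pow]
    calc (r : ℝ) = ((r : ℝ) ^ (1 / 3 : ℝ)) ^ 3 := by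
          rw [← Real.rpow_mul_natCast (by positivity)]; norm_num
      _ ≤ (q : ℝ) ^ 3 := by gcongr
  calc (fGraph (cycleGraph 10) r : ℝ) ≤ 2 * (q : ℝ) ^ 2 :=
        mod_cast fGraph_cycleGraph_ten_le_of_isPrimePow hq hr
    _ ≤ 2 * (c * (r : ℝ) ^ (1 / 3 : ℝ)) ^ 2 := by gcongr
    _ = 2 * c ^ 2 * (r : ℝ) ^ ((2 : ℝ) / 3) := by
        rw [mul_pow, ← Real.rpow_mul_natCast (by positivity)]
        norm_num [mul_assoc]
    _ = (2 + ε) * (r : ℝ) ^ ((2 : ℝ) / 3) := by rw [hcε]; ring
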